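/- Let n ≥ 1 and let L : ℝⁿ × ℝⁿ → ℝ be superlinear in the velocity, in the sense that for every C > 0 there exists D ∈ ℝ such that L(x,v) ≥ C‖v‖ − D for all (x,v) ∈ ℝⁿ × ℝⁿ. Then for any two distinct points m₀, m₁ ∈ ℝⁿ, the infimum over Lipschitz curves γ : [0,T] → ℝⁿ with γ(0) = m₀ and γ(T) = m₁ of the action ∫₀ᵀ L(γ(t), γ'(t)) dt tends to +∞ as T → 0⁺; that is, for every R > 0 there exists T₀ > 0 such that for all T ∈ (0, T₀) every such curve has action at least R. -/

import Mathlib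

open Set

/-- Small-time blow-up of the minimal connecting action (half of Lemma 6.4 of the
paper): for a (continuous) Lagrangian with superlinear growth in the velocity, the
action of Lipschitz curves joining two distinct points in time T tends to +∞ as T → 0⁺. -/
theorem stmt_16 (n : ℕ) (hn : 1 ≤ n)
    (L : EuclideanSpace ℝ (Fin n) → EuclideanSpace ℝ (Fin n) → ℝ)
    (hLc : Continuous fun q : EuclideanSpace ℝ (Fin n) × EuclideanSpace ℝ (Fin n) =>
      L q.1 q.2)
    (hsuper : ∀ C : ℝ, 0 < C → ∃ D : ℝ, ∀ x v : EuclideanSpace ℝ (Fin n),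
      C * ‖v‖ - D ≤ L x v)
    (m₀ m₁ : EuclideanSpace ℝ (Fin n)) (hne : m₀ ≠ m₁) :
    ∀ R : ℝ, 0 < R → ∃ T₀ : ℝ, 0 < T₀ ∧ ∀ T : ℝ, 0 < T → T < T₀ →
      ∀ γ : ℝ → EuclideanSpace ℝ (Fin n),
        (∃ K, LipschitzOnWith K γ (Icc 0 T)) → γ 0 = m₀ → γ T = m₁ →
        R ≤ ∫ t in (0:ℝ)..T, L (γ t) (derivWithin γ (Icc 0 T) t) := by
  intro R hR
  have hd : 0 < ‖m₁ - m₀‖ := norm_pos_iff.mpr (sub_ne_zero.mpr hne.symm)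
  set d := ‖m₁ - m₀‖ with hd_def
  obtain ⟨D, hD⟩ := hsuper ((R + 1) / d) (by positivity)
  refine ⟨1 / (|D| + 1), by positivity, ?_⟩
  rintro T hT hTT γ ⟨K, hK⟩ h0 h1
  let g : ℝ → EuclideanSpace ℝ (Fin n) := fun t => γ (projIcc 0 T hT.le t)
  have hg : LipschitzWith K g := by
    have := (lipschitzOnWith_iff_restrict.mp hK).comp (LipschitzWith.projIcc hT.le)
    rw [mul_one] at this
    exact this
  have hgeq : ∀ t ∈ Icc 0 T, g t = γ t := by
    intro t ht
    simp only [g, projIcc_of_mem hT.le ht]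
  have hg0 : g 0 = m₀ := by rw [hgeq 0 ⟨le_rfl, hT.le⟩, h0]
  have hg1 : g T = m₁ := by rw [hgeq T ⟨hT.le, le_rfl⟩, h1]
  -- replace the curve by its Lipschitz extension
  have hint : ∫ t in (0:ℝ)..T, L (γ t) (derivWithin γ (Icc 0 T) t)
      = ∫ t in (0:ℝ)..T, L (g t) (deriv g t) := by
    apply intervalIntegral.integral_congr_Ioo_of_le hT.le
    intro t ht
    have hn : Icc 0 T ∈ nhds t := Icc_mem_nhds ht.1 ht.2
    have he : g =ᶠ[nhds t] γ := Filter.eventually_of_mem hn hgeq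
    simp only
    rw [derivWithin_of_mem_nhds hn, he.deriv_eq, he.eq_of_nhds]
  rw [hint]
  have hmeas : Measurable fun t => L (g t) (deriv g t) :=
    hLc.measurable.comp (hg.continuous.measurable.prodMk (measurable_deriv g))
  have hii : IntervalIntegrable (fun t => L (g t) (deriv g t)) MeasureTheory.volume 0 T := by
    have hcomp : IsCompact (Metric.closedBall (m₀ : EuclideanSpace ℝ (Fin n)) (K * T) ×ˢ
        Metric.closedBall (0 : EuclideanSpace ℝ (Fin n)) K) :=
      (isCompact_closedBall _ _).prod (isCompact_closedBall _ _)
    obtain ⟨B, hB⟩ := hcomp.exists_bound_of_continuousOn hLc.continuousOn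
    rw [intervalIntegrable_iff]
    refine MeasureTheory.Measure.integrableOn_of_bounded (M := B) (by simp)
      hmeas.aestronglyMeasurable ?_
    refine (MeasureTheory.ae_restrict_iff' measurableSet_uIoc).mpr (Filter.Eventually.of_forall ?_)
    intro t ht
    rw [uIoc_of_le hT.le] at ht
    refine hB (g t, deriv g t) ⟨?_, ?_⟩
    · have := hg.dist_le_mul t 0
      rw [hg0, Real.dist_eq, sub_zero, abs_of_pos ht.1] at this
      exact this.trans (mul_le_mul_of_nonneg_left ht.2 K.2)
    · simpa using norm_deriv_le_of_lipschitz hg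
  -- project on the direction of displacement
  let ℓ := innerSL ℝ (m₁ - m₀)
  have hℓ : ∀ v, ℓ v = inner ℝ (m₁ - m₀) v := fun v => innerSL_apply_apply ℝ _ _
  have hf : LipschitzWith (‖ℓ‖₊ * K) (fun t => ℓ (g t)) := ℓ.lipschitz.comp hg
  have hac : AbsolutelyContinuousOnInterval (fun t => ℓ (g t)) 0 T :=
    hf.lipschitzOnWith.absolutelyContinuousOnInterval
  have hftc := hac.integral_deriv_eq_sub
  have hval : ℓ (g T) - ℓ (g 0) = d ^ 2 := by
    rw [hg0, hg1, ← map_sub, hℓ]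
    exact real_inner_self_eq_norm_sq _
  rw [hval] at hftc
  have hfi := hac.intervalIntegrable_deriv
  have hmono : ∫ t in (0:ℝ)..T, ((R + 1) / d ^ 2 * deriv (fun t => ℓ (g t)) t - D)
      ≤ ∫ t in (0:ℝ)..T, L (g t) (deriv g t) := by
    apply intervalIntegral.integral_mono_ae hT.le ((hfi.const_mul _).sub (by simp)) hii
    filter_upwards [hg.ae_differentiableAt_real] with t ht
    have h2 : deriv (fun t => ℓ (g t)) t = ℓ (deriv g t) :=
      (ℓ.hasFDerivAt.comp_hasDerivAt t ht.hasDerivAt).deriv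
    have h3 : ℓ (deriv g t) ≤ d * ‖deriv g t‖ := by
      rw [hℓ]
      exact real_inner_le_norm _ _
    have h4 : (R + 1) / d ^ 2 * ℓ (deriv g t) ≤ (R + 1) / d ^ 2 * (d * ‖deriv g t‖) :=
      mul_le_mul_of_nonneg_left h3 (by positivity)
    have h5 : (R + 1) / d ^ 2 * (d * ‖deriv g t‖) = (R + 1) / d * ‖deriv g t‖ := by
      field_simp
    have h6 := hD (g t) (deriv g t)
    rw [h2]
    linarith
  rw [intervalIntegral.integral_sub (hfi.const_mul _) (by simp),
    intervalIntegral.integral_const_mul, hftc, intervalIntegral.integral_const,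
    div_mul_cancel₀ _ (by positivity), sub_zero, smul_eq_mul] at hmono
  have h7 : T * (|D| + 1) < 1 := by rwa [lt_div_iff₀ (by positivity)] at hTT
  have h8 : T * D ≤ T * |D| := mul_le_mul_of_nonneg_left (le_abs_self D) hT.le
  linarith
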